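/- Let Δt, Δx > 0, λ = Δt/Δx, and τ > 0. Let M_L⁻, M_L⁺, M_R⁻, M_R⁺ ∈ ℝ⁵ each be of three-point HyQMOM form with ρ₁, ρ₂, ρ₃ > 0 and v₁ < v₂ < v₃ (each state with its own parameters), with interface speeds δ_L±, δ_R± and HLL fluxes F̂_L, F̂_R as in the HLL construction, and cell average M̄ = ½(M_L⁺ + M_R⁻). Let S denote the BGK source, and suppose μ > 0 is such that H₂(M_L⁺ + μ S(M_L⁺)) and H₂(M_R⁻ + μ S(M_R⁻)) are positive semidefinite. Define M_new = M̄ − λ(F̂_R − F̂_L) + (Δt/2)(S(M_L⁺) + S(M_R⁻)). If λ(δ_L⁺ − δ_L⁻) + Δt/μ < ½ and λ(δ_R⁺ − δ_R⁻) + Δt/μ < ½, then H₂(M_new) is positive definite. -/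

import Mathlib

/-- The `3×3` Hankel matrix `H₂(c)` of a vector `c ∈ ℝ⁵`, with `(j,k)` entry `c_{j+k}`. -/
noncomputable def hankel2 (c : Fin 5 → ℝ) : Matrix (Fin 3) (Fin 3) ℝ :=
  Matrix.of fun j k => c ⟨j.1 + k.1, by have := j.isLt; have := k.isLt; omega⟩

/-- Parameters of a three-point HyQMOM state: positive weights and ordered abscissas. -/
structure HyqParams where
  r1 : ℝ
  r2 : ℝ
  r3 : ℝ
  v1 : ℝ
  v2 : ℝ
  v3 : ℝ
  hr1 : 0 < r1
  hr2 : 0 < r2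
  hr3 : 0 < r3
  h12 : v1 < v2
  h23 : v2 < v3

/-- Moment vector `M_k = ρ₁v₁^k + ρ₂v₂^k + ρ₃v₃^k`, `k = 0,…,4`. -/
noncomputable def HyqParams.M (W : HyqParams) : Fin 5 → ℝ :=
  fun k => W.r1 * W.v1 ^ k.1 + W.r2 * W.v2 ^ k.1 + W.r3 * W.v3 ^ k.1

/-- Flux vector `F(M) = (M₁,…,M₄,M₅)` with `M₅ = ρ₁v₁⁵ + ρ₂v₂⁵ + ρ₃v₃⁵`. -/
noncomputable def HyqParams.F (W : HyqParams) : Fin 5 → ℝ :=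
  fun k => W.r1 * W.v1 ^ (k.1 + 1) + W.r2 * W.v2 ^ (k.1 + 1) + W.r3 * W.v3 ^ (k.1 + 1)

/-- Wave speed `δ⁺(M) = max{v₁, v₂, v₃, 0}`. -/
noncomputable def HyqParams.dp (W : HyqParams) : ℝ :=
  max (max (max W.v1 W.v2) W.v3) 0

/-- Wave speed `δ⁻(M) = min{v₁, v₂, v₃, 0}`. -/
noncomputable def HyqParams.dm (W : HyqParams) : ℝ :=
  min (min (min W.v1 W.v2) W.v3) 0

/-- HLL numerical flux
`F̂(M⁻,M⁺) = (δ̂⁺F(M⁻) − δ̂⁻F(M⁺) + δ̂⁺δ̂⁻(M⁺ − M⁻))/(δ̂⁺ − δ̂⁻)`. -/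
noncomputable def hllFlux (dp dm : ℝ) (Mm Mp Fm Fp : Fin 5 → ℝ) : Fin 5 → ℝ :=
  fun k => (dp * Fm k - dm * Fp k + dp * dm * (Mp k - Mm k)) / (dp - dm)

/-- BGK source `S(M) = (0,0,0,(ρΔ₃(U,θ) − M₃)/τ, (ρΔ₄(U,θ) − M₄)/τ)` with `ρ = M₀`,
`U = M₁/M₀`, `θ = M₂/M₀ − U²`. -/
noncomputable def bgkSource (τ : ℝ) (M : Fin 5 → ℝ) : Fin 5 → ℝ :=
  ![0, 0, 0,
    (M 0 * ((M 1 / M 0) ^ 3 + 3 * (M 1 / M 0) * (M 2 / M 0 - (M 1 / M 0) ^ 2)) - M 3) / τ,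
    (M 0 * ((M 1 / M 0) ^ 4 + 6 * (M 1 / M 0) ^ 2 * (M 2 / M 0 - (M 1 / M 0) ^ 2)
        + 3 * (M 2 / M 0 - (M 1 / M 0) ^ 2) ^ 2) - M 4) / τ]

def qf (x : Fin 3 → ℝ) (c : Fin 5 → ℝ) : ℝ :=
  x 0 ^ 2 * c 0 + 2 * x 0 * x 1 * c 1 + (2 * x 0 * x 2 + x 1 ^ 2) * c 2
    + 2 * x 1 * x 2 * c 3 + x 2 ^ 2 * c 4

def pv (x : Fin 3 → ℝ) (v : ℝ) : ℝ := x 0 + x 1 * v + x 2 * v ^ 2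

lemma hankel2_qf (x : Fin 3 → ℝ) (c : Fin 5 → ℝ) :
    dotProduct (star x) ((hankel2 c).mulVec x) = qf x c := by
  simp [hankel2, qf, Matrix.mulVec, dotProduct, Fin.sum_univ_three]
  ring

lemma qf_M (x : Fin 3 → ℝ) (W : HyqParams) :
    qf x W.M = W.r1 * pv x W.v1 ^ 2 + W.r2 * pv x W.v2 ^ 2 + W.r3 * pv x W.v3 ^ 2 := by
  simp [qf, pv, HyqParams.M]
  ring

lemma qf_F (x : Fin 3 → ℝ) (W : HyqParams) :
    qf x W.F = W.v1 * (W.r1 * pv x W.v1 ^ 2) + W.v2 * (W.r2 * pv x W.v2 ^ 2)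
      + W.v3 * (W.r3 * pv x W.v3 ^ 2) := by
  simp [qf, pv, HyqParams.F]
  ring

lemma qf_M_pos (x : Fin 3 → ℝ) (hx : x ≠ 0) (W : HyqParams) : 0 < qf x W.M := by
  rw [qf_M]
  have h1 := mul_nonneg W.hr1.le (sq_nonneg (pv x W.v1))
  have h2 := mul_nonneg W.hr2.le (sq_nonneg (pv x W.v2))
  have h3 := mul_nonneg W.hr3.le (sq_nonneg (pv x W.v3))
  by_contra hn
  have z1 : pv x W.v1 = 0 := by
    have : W.r1 * pv x W.v1 ^ 2 = 0 := by linarith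
    simpa [W.hr1.ne'] using this
  have z2 : pv x W.v2 = 0 := by
    have : W.r2 * pv x W.v2 ^ 2 = 0 := by linarith
    simpa [W.hr2.ne'] using this
  have z3 : pv x W.v3 = 0 := by
    have : W.r3 * pv x W.v3 ^ 2 = 0 := by linarith
    simpa [W.hr3.ne'] using this
  simp only [pv] at z1 z2 z3
  have h12 : W.v2 - W.v1 ≠ 0 := (sub_pos.2 W.h12).ne'
  have h23 : W.v3 - W.v2 ≠ 0 := (sub_pos.2 W.h23).ne'
  have h13 : W.v3 - W.v1 ≠ 0 := (sub_pos.2 (W.h12.trans W.h23)).ne'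
  have e1 : x 1 + x 2 * (W.v1 + W.v2) = 0 :=
    mul_left_cancel₀ h12 (by linear_combination z2 - z1)
  have e2 : x 1 + x 2 * (W.v2 + W.v3) = 0 :=
    mul_left_cancel₀ h23 (by linear_combination z3 - z2)
  have x2 : x 2 = 0 := mul_left_cancel₀ h13 (by linear_combination e2 - e1)
  have x1 : x 1 = 0 := by simpa [x2] using e1
  have x0 : x 0 = 0 := by simpa [x2, x1] using z1
  apply hx
  ext i
  fin_cases i <;> simp [x0, x1, x2]

lemma qf_F_bounds (x : Fin 3 → ℝ) (W : HyqParams) (a b : ℝ) (ha : a ≤ W.dm) (hb : W.dp ≤ b) :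
    a * qf x W.M ≤ qf x W.F ∧ qf x W.F ≤ b * qf x W.M := by
  rw [qf_M, qf_F]
  have h1 := mul_nonneg W.hr1.le (sq_nonneg (pv x W.v1))
  have h2 := mul_nonneg W.hr2.le (sq_nonneg (pv x W.v2))
  have h3 := mul_nonneg W.hr3.le (sq_nonneg (pv x W.v3))
  simp only [HyqParams.dm, HyqParams.dp, le_min_iff, max_le_iff] at ha hb
  obtain ⟨⟨⟨a1, a2⟩, a3⟩, _⟩ := ha
  obtain ⟨⟨⟨b1, b2⟩, b3⟩, _⟩ := hb
  constructor
  · linarith [mul_le_mul_of_nonneg_right a1 h1, mul_le_mul_of_nonneg_right a2 h2,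
      mul_le_mul_of_nonneg_right a3 h3]
  · linarith [mul_le_mul_of_nonneg_right b1 h1, mul_le_mul_of_nonneg_right b2 h2,
      mul_le_mul_of_nonneg_right b3 h3]

lemma qf_hll (x : Fin 3 → ℝ) (p m : ℝ) (Mm Mp Fm Fp : Fin 5 → ℝ) :
    qf x (hllFlux p m Mm Mp Fm Fp)
      = (p * qf x Fm - m * qf x Fp + p * m * (qf x Mp - qf x Mm)) / (p - m) := by
  simp only [qf, hllFlux]
  ring

lemma hll_bounds (x : Fin 3 → ℝ) (A B : HyqParams) (p m : ℝ)
    (hp : p = max A.dp B.dp) (hm : m = min A.dm B.dm) :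
    -((p - m) * qf x B.M) ≤ qf x (hllFlux p m A.M B.M A.F B.F) ∧
    qf x (hllFlux p m A.M B.M A.F B.F) ≤ (p - m) * qf x A.M := by
  have pA : A.dp ≤ p := hp ▸ le_max_left _ _
  have pB : B.dp ≤ p := hp ▸ le_max_right _ _
  have mA : m ≤ A.dm := hm ▸ min_le_left _ _
  have mB : m ≤ B.dm := hm ▸ min_le_right _ _
  obtain ⟨a1, a2⟩ := qf_F_bounds x A m p mA pA
  obtain ⟨b1, b2⟩ := qf_F_bounds x B m p mB pB
  have hA : 0 ≤ qf x A.M := by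
    have := A.hr1; have := A.hr2; have := A.hr3
    rw [qf_M]; positivity
  have hB : 0 ≤ qf x B.M := by
    have := B.hr1; have := B.hr2; have := B.hr3
    rw [qf_M]; positivity
  have p0 : 0 ≤ p := le_trans (le_max_right _ _) pA
  have m0 : m ≤ 0 := mA.trans (min_le_right _ _)
  have hpm : 0 < p - m := by
    simp only [HyqParams.dm, HyqParams.dp, le_min_iff, max_le_iff] at mA pA
    linarith [A.h12, mA.1.1.1, pA.1.1.2]
  rw [qf_hll]
  have k1 := mul_le_mul_of_nonneg_left a1 p0
  have k2 := mul_le_mul_of_nonneg_left a2 p0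
  have k3 := mul_le_mul_of_nonneg_left b1 (neg_nonneg.2 m0)
  have k4 := mul_le_mul_of_nonneg_left b2 (neg_nonneg.2 m0)
  have j1 := mul_nonneg (mul_nonneg hpm.le p0) hB
  have j2 := mul_nonneg (mul_nonneg hpm.le (neg_nonneg.2 m0)) hA
  constructor
  · rw [le_div_iff₀ hpm]; nlinarith
  · rw [div_le_iff₀ hpm]; nlinarith

/-- realizability of the explicit-BGK HLL finite-volume update for the
three-point HyQMOM closure.  If `μ > 0` keeps `H₂(M_L⁺ + μS(M_L⁺))` and `H₂(M_R⁻ + μS(M_R⁻))`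
positive semidefinite, and `λ(δ⁺ − δ⁻) + Δt/μ < 1/2` at both interfaces (`λ = Δt/Δx`), then
`H₂(M_new)` is positive definite, where
`M_new = ½(M_L⁺ + M_R⁻) − λ(F̂_R − F̂_L) + (Δt/2)(S(M_L⁺) + S(M_R⁻))`. -/
theorem hyqmom_hll_bgk_update_posDef (Δt Δx lam τ μ : ℝ)
    (hΔt : 0 < Δt) (hΔx : 0 < Δx) (hlam : lam = Δt / Δx) (hτ : 0 < τ) (hμ : 0 < μ)
    (WLm WLp WRm WRp : HyqParams)
    (dLp dLm dRp dRm : ℝ)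
    (hdLp : dLp = max WLm.dp WLp.dp)
    (hdLm : dLm = min WLm.dm WLp.dm)
    (hdRp : dRp = max WRm.dp WRp.dp)
    (hdRm : dRm = min WRm.dm WRp.dm)
    (FL FR : Fin 5 → ℝ)
    (hFL : FL = hllFlux dLp dLm WLm.M WLp.M WLm.F WLp.F)
    (hFR : FR = hllFlux dRp dRm WRm.M WRp.M WRm.F WRp.F)
    (hrealL : (hankel2 (fun k => WLp.M k + μ * bgkSource τ WLp.M k)).PosSemidef)
    (hrealR : (hankel2 (fun k => WRm.M k + μ * bgkSource τ WRm.M k)).PosSemidef)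
    (hCFL_L : lam * (dLp - dLm) + Δt / μ < 1 / 2)
    (hCFL_R : lam * (dRp - dRm) + Δt / μ < 1 / 2) :
    (hankel2 (fun k => (WLp.M k + WRm.M k) / 2 - lam * (FR k - FL k)
        + Δt / 2 * (bgkSource τ WLp.M k + bgkSource τ WRm.M k))).PosDef := by
  have hherm : ∀ c : Fin 5 → ℝ, (hankel2 c).IsHermitian := by
    intro c
    ext i j
    simp [hankel2, add_comm]
  refine Matrix.PosDef.of_dotProduct_mulVec_pos (hherm _) fun x hx => ?_
  have sL := hrealL.dotProduct_mulVec_nonneg x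
  have sR := hrealR.dotProduct_mulVec_nonneg x
  rw [hankel2_qf] at sL sR ⊢
  have lin1 : ∀ A B : Fin 5 → ℝ, qf x (fun k => A k + μ * B k) = qf x A + μ * qf x B := by
    intro A B; simp only [qf]; ring
  rw [lin1] at sL sR
  have lin2 : ∀ A B C D E G : Fin 5 → ℝ,
      qf x (fun k => (A k + B k) / 2 - lam * (C k - D k) + Δt / 2 * (E k + G k))
      = (qf x A + qf x B) / 2 - lam * (qf x C - qf x D) + Δt / 2 * (qf x E + qf x G) := by
    intro A B C D E G; simp only [qf]; ring
  rw [lin2]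
  have hL := (hll_bounds x WLm WLp dLp dLm hdLp hdLm).1
  have hR := (hll_bounds x WRm WRp dRp dRm hdRp hdRm).2
  rw [← hFL] at hL
  rw [← hFR] at hR
  have pL := qf_M_pos x hx WLp
  have pR := qf_M_pos x hx WRm
  have l0 : 0 < lam := hlam ▸ div_pos hΔt hΔx
  have t0 : 0 < Δt / μ := div_pos hΔt hμ
  have hL' := mul_le_mul_of_nonneg_left hL l0.le
  have hR' := mul_le_mul_of_nonneg_left hR l0.le
  have cL := mul_pos (sub_pos.2 hCFL_L) pL
  have cR := mul_pos (sub_pos.2 hCFL_R) pR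
  have e : Δt / μ * μ = Δt := div_mul_cancel₀ _ hμ.ne'
  have tL := mul_nonneg t0.le sL
  have tR := mul_nonneg t0.le sR
  rw [mul_add, ← mul_assoc, e] at tL tR
  have uL := mul_pos t0 pL
  have uR := mul_pos t0 pR
  linarith
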